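/- arXiv:1102.2457 — 3 statements merged into one kernel-verified Lean document; each statement's English description precedes it below -/
import Mathlib

section
/- Let n ≥ 1, γ, δ ∈ ℂ and c_1,…,c_n, d_1,…,d_n ∈ ℂ with Re(γ) > 0, Re(δ) > 0 and Re(c_j) > 0, Re(d_j) > 0 for all 1 ≤ j ≤ n; set c_0 = d_0 = 0. Then, integrating each variable over the imaginary axis: (1/(4πi)^n)·∫_{z_1,…,z_n} ∏_{j=1}^{n} Γ_ℝ(c_{j−1}+γ+z_j)·Γ_ℝ(c_j+z_j)·Γ_ℝ(d_{j−1}+δ−z_j)·Γ_ℝ(d_j−z_j) dz_1⋯dz_n = [Γ_ℝ(c_1+δ)·Γ_ℝ(d_1+γ)·Γ_ℝ(γ+δ)·Γ_ℝ(c_n+d_n) / Γ_ℝ(γ+δ+c_n+d_n)] · (1/(4πi)^{n−1})·∫_{z_1,…,z_{n−1}} ∏_{j=1}^{n−1} Γ_ℝ(c_j+z_j)·Γ_ℝ(c_{j+1}+δ+z_j)·Γ_ℝ(d_j−z_j)·Γ_ℝ(d_{j+1}+γ−z_j) dz_1⋯dz_{n−1}. -/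
open MeasureTheory Complex

noncomputable section

/-- `Γ_ℝ(s) = π^{-s/2} Γ(s/2)`. -/
def GammaR (s : ℂ) : ℂ := (Real.pi : ℂ) ^ (-s / 2) * Complex.Gamma (s / 2)

/-- Modified Bessel function of the second kind, via its integral representation. -/
def BesselK (ν : ℂ) (y : ℝ) : ℂ :=
  (1 / 2) * ∫ t in Set.Ioi (0 : ℝ),
    Complex.exp (-((y : ℂ) / 2) * ((t : ℂ) + 1 / (t : ℂ))) * (t : ℂ) ^ ν / (t : ℂ)

/-- Extend a finite real tuple to `ℕ`, defaulting to `1`. -/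
def extR {k : ℕ} (t : Fin k → ℝ) : ℕ → ℝ := fun i => if h : i < k then t ⟨i, h⟩ else 1

/-- Extend a finite real tuple to `ℕ`, defaulting to `0`. -/
def extR0 {k : ℕ} (t : Fin k → ℝ) : ℕ → ℝ := fun i => if h : i < k then t ⟨i, h⟩ else 0

/-- The positive orthant. -/
def posSet (k : ℕ) : Set (Fin k → ℝ) := {t | ∀ j, 0 < t j}

/-- `|a| = a_1 + ⋯ + a_n` (0-based indexing). -/
def sumA (n : ℕ) (a : ℕ → ℂ) : ℂ := ∑ j ∈ Finset.range n, a j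

/-- `ã_j = a_{j+1} + a_1/(n-1)` (0-based indexing). -/
def tildeA (n : ℕ) (a : ℕ → ℂ) : ℕ → ℂ := fun j => a (j + 1) + a 0 / ((n : ℂ) - 1)

/-- The normalized radial part `Ŵ^A_{n,a}` of the class one `GL_n(ℝ)` Whittaker function,
as a function of `(y_1,…,y_{n-1})` (0-based indexing). -/
def WhittAr : ℕ → (ℕ → ℂ) → (ℕ → ℝ) → ℂ
  | 0, _, _ => 1
  | 1, _, _ => 1
  | 2, a, y => 2 * ((y 0 : ℂ) ^ ((a 0 + a 1) / 2)) *
      BesselK ((a 0 - a 1) / 2) (2 * Real.pi * y 0)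
  | (n + 3), a, y =>
      ∫ t in posSet (n + 2),
        WhittAr (n + 2) (tildeA (n + 3) a)
            (fun j => y (j + 1) * Real.sqrt (extR t (j + 1) / extR t j)) *
          (∏ j ∈ Finset.range (n + 2),
            Complex.exp (((-(Real.pi * y j) ^ 2 * extR t j - 1 / extR t j : ℝ) : ℂ)) *
              ((Real.pi * y j : ℝ) : ℂ) ^ ((((n + 2 - j : ℕ) : ℂ) * a 0) / ((n + 2 : ℕ) : ℂ)) *
              ((extR t j : ℝ) : ℂ) ^ ((((n + 3 : ℕ) : ℂ) * a 0) / (2 * ((n + 2 : ℕ) : ℂ)))) *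
          ((Real.pi * extR t (n + 1) : ℝ) : ℂ) ^ (-(sumA (n + 3) a) / 2) *
          (∏ j ∈ Finset.range (n + 2), ((extR t j : ℝ) : ℂ))⁻¹

/-- `Ŵ^A_{n,a}` as a function of the full tuple `(y_1,…,y_n)`. -/
def WhittAhat (n : ℕ) (a : ℕ → ℂ) (y : ℕ → ℝ) : ℂ :=
  ((y (n - 1) : ℝ) : ℂ) ^ sumA n a * WhittAr n a y

/-- The Mellin transform `U_{n,a}` (0-based: `s j` stands for `s_{j+1}`). -/
def Ufun (n : ℕ) (a : ℕ → ℂ) (s : ℕ → ℂ) : ℂ :=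
  ∫ y in posSet (n - 1),
    WhittAr n a (extR y) *
      ∏ j ∈ Finset.range (n - 1), ((extR y j : ℝ) : ℂ) ^ s j / ((extR y j : ℝ) : ℂ)

/-- The normalized radial part `Ŵ^B_{n,b}` of the class one `SO_{2n+1}(ℝ)` Whittaker function. -/
def WhittBr : ℕ → (ℕ → ℂ) → (ℕ → ℝ) → ℂ
  | 0, _, _ => 1
  | 1, b, y => 2 * BesselK (b 0 / 2) (2 * Real.pi * y 0)
  | (n + 2), b, y =>
      ∫ p in (posSet (n + 2) ×ˢ posSet (n + 1)),
        WhittBr (n + 1) b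
            (fun j =>
              if j < n then
                y (j + 1) *
                  Real.sqrt (extR p.1 (j + 1) * extR p.2 (j + 1) /
                    (extR p.1 (j + 2) * extR p.2 j))
              else y (n + 1) * Real.sqrt (extR p.1 (n + 1) / extR p.2 n)) *
          (∏ j ∈ Finset.range (n + 2),
            Complex.exp (((-(Real.pi * y j) ^ 2 * extR p.1 j - 1 / extR p.1 j : ℝ) : ℂ)) *
              ((Real.pi * y j : ℝ) : ℂ) ^ b (n + 1)) *
          (∏ j ∈ Finset.range (n + 1),
            Complex.exp (((-(Real.pi * y j) ^ 2 * (extR p.1 j / extR p.1 (j + 1)) * extR p.2 j -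
                  1 / extR p.2 j : ℝ) : ℂ)) *
              ((extR p.1 (j + 1) * extR p.2 j : ℝ) : ℂ) ^ (b (n + 1) / 2)) *
          ((extR p.1 0 : ℝ) : ℂ) ^ b (n + 1) *
          (∏ j ∈ Finset.range (n + 1), ((extR p.2 j : ℝ) : ℂ))⁻¹ *
          (∏ j ∈ Finset.range (n + 2), ((extR p.1 j : ℝ) : ℂ))⁻¹

/-- The Mellin transform `V_{n,b}` (0-based: `s j` stands for `s_{j+1}`). -/
def Vfun (n : ℕ) (b : ℕ → ℂ) (s : ℕ → ℂ) : ℂ :=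
  ∫ y in posSet n,
    WhittBr n b (extR y) *
      ∏ j ∈ Finset.range n, ((extR y j : ℝ) : ℂ) ^ s j / ((extR y j : ℝ) : ℂ)

/-- Integral over the vertical line `Re z = c`, i.e. `i·∫_ℝ f(c+it) dt`. -/
def VInt (c : ℝ) (f : ℂ → ℂ) : ℂ := Complex.I * ∫ t : ℝ, f (c + t * Complex.I)

/-- Iterated integral over `k` vertical lines with abscissas `c 0, …, c (k-1)`;
the integrand is fed the contour points as a 0-based sequence. -/
def VIntK (k : ℕ) (c : ℕ → ℝ) (f : (ℕ → ℂ) → ℂ) : ℂ :=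
  Complex.I ^ k * ∫ t : Fin k → ℝ, f (fun i => (c i : ℂ) + (extR0 t i : ℝ) * Complex.I)

/-! Barnes' first lemma evaluates each one-variable integral, since the integrand is a product over
`j`. Put `Q j = Γ_ℝ(c_j + d_j) / Γ_ℝ(γ + δ + c_j + d_j)`. The evaluation shows that the integral in
the `(j + 1)`-st variable on the left, times `Q j`, is `Q (j + 1)` times the integral in the `j`-th
variable on the right, so the product telescopes; the first integral on the left supplies the
remaining Gamma factors.

Barnes' first lemma is Parseval's formula for the beta densities `σ(u)^a σ(-u)^c` in the logistic
coordinate `u`: their Fourier transforms are beta integrals, and the product of two such densities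
is again of the same shape. -/

open scoped FourierTransform

section FourierParseval

variable {V E : Type*} [NormedAddCommGroup V] [InnerProductSpace ℝ V] [FiniteDimensional ℝ V]
  [MeasurableSpace V] [BorelSpace V] [NormedAddCommGroup E] [NormedSpace ℂ E] [CompleteSpace E]

theorem integral_fourier_smul_fourier {f : V → ℂ} {g : V → E} (hf : Integrable f)
    (hg : Integrable g) (hg_cont : Continuous g) (hg_fourier : Integrable (𝓕 g)) :
    ∫ ξ, 𝓕 f ξ • 𝓕 g ξ = ∫ x, f x • g (-x) := by
  have fourier_fourier (x : V) : 𝓕 (𝓕 g) x = g (-x) := by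
    rw [← hg_cont.fourierInv_fourier_eq hg hg_fourier, Real.fourierInv_eq_fourier_neg, neg_neg,
      hg_cont.fourierInv_fourier_eq hg hg_fourier]
  have self_adjoint : ∫ ξ, 𝓕 f ξ • 𝓕 g ξ = ∫ x, f x • 𝓕 (𝓕 g) x := by
    have h := VectorFourier.integral_fourierIntegral_smul_eq_flip (L := innerₗ V)
      Real.continuous_fourierChar continuous_inner hf hg_fourier
    rwa [flip_innerₗ] at h
  simpa only [fourier_fourier] using self_adjoint

end FourierParseval

/-- The beta density `x ^ (a - 1) * (1 - x) ^ (c - 1) dx` on `(0, 1)` pulled back to the real line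
along the sigmoid function `x = σ(u)`; the Jacobian `σ(u) σ(-u)` raises both exponents by one.
It turns the multiplicative convolution behind Barnes' first lemma into a Fourier transform. -/
def logisticBeta (a c : ℂ) (u : ℝ) : ℂ :=
  (Real.sigmoid u : ℂ) ^ a * (Real.sigmoid (-u) : ℂ) ^ c

theorem ofReal_sigmoid_ne_zero (u : ℝ) : (Real.sigmoid u : ℂ) ≠ 0 :=
  ofReal_ne_zero.mpr (Real.sigmoid_pos u).ne'

theorem logisticBeta_mul (a b c d : ℂ) (u : ℝ) :
    logisticBeta a c u * logisticBeta b d u = logisticBeta (a + b) (c + d) u := by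
  simp only [logisticBeta, cpow_add _ _ (ofReal_sigmoid_ne_zero _)]
  ring

theorem logisticBeta_neg (a c : ℂ) (u : ℝ) : logisticBeta a c (-u) = logisticBeta c a u := by
  rw [logisticBeta, logisticBeta, neg_neg, mul_comm]

theorem norm_logisticBeta (a c : ℂ) (u : ℝ) :
    ‖logisticBeta a c u‖ = Real.sigmoid u ^ a.re * Real.sigmoid (-u) ^ c.re := by
  rw [logisticBeta, norm_mul, norm_cpow_eq_rpow_re_of_pos (Real.sigmoid_pos _),
    norm_cpow_eq_rpow_re_of_pos (Real.sigmoid_pos _)]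

theorem continuous_logisticBeta (a c : ℂ) : Continuous (logisticBeta a c) := by
  have continuous_sigmoid_cpow (s : ℂ) : Continuous fun u : ℝ => (Real.sigmoid u : ℂ) ^ s :=
    (continuous_ofReal.comp continuous_sigmoid).cpow continuous_const fun u =>
      ofReal_mem_slitPlane.mpr (Real.sigmoid_pos u)
  exact (continuous_sigmoid_cpow a).mul ((continuous_sigmoid_cpow c).comp continuous_neg)

theorem cexp_mul_eq_logisticBeta (u : ℝ) (z : ℂ) : cexp (u * z) = logisticBeta z (-z) u := by
  have sigmoid_eq : Real.sigmoid u = Real.sigmoid (-u) * Real.exp u := by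
    simpa using (Real.sigmoid_mul_rexp_neg (-u)).symm
  have exp_cpow : (Real.exp u : ℂ) ^ z = cexp (u * z) := by
    rw [cpow_def_of_ne_zero (by simp), ← ofReal_log (Real.exp_pos u).le, Real.log_exp]
  have sigmoid_cpow_ne_zero : (Real.sigmoid (-u) : ℂ) ^ z ≠ 0 := by
    simp [cpow_eq_zero_iff, (Real.sigmoid_pos (-u)).ne']
  rw [logisticBeta, sigmoid_eq, ofReal_mul, mul_cpow_ofReal_nonneg (Real.sigmoid_nonneg _)
    (Real.exp_pos u).le, exp_cpow, cpow_neg, mul_right_comm, mul_inv_cancel₀ sigmoid_cpow_ne_zero,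
    one_mul]

theorem abs_deriv_sigmoid_smul_eq_logisticBeta (a c : ℂ) (u : ℝ) :
    |Real.sigmoid u * (1 - Real.sigmoid u)| •
      ((Real.sigmoid u : ℂ) ^ (a - 1) * (1 - (Real.sigmoid u : ℂ)) ^ (c - 1)) =
    logisticBeta a c u := by
  have one_sub_sigmoid : 1 - (Real.sigmoid u : ℂ) = (Real.sigmoid (-u) : ℂ) := by
    simp [Real.sigmoid_neg]
  rw [← Real.sigmoid_neg, abs_of_pos (mul_pos (Real.sigmoid_pos u) (Real.sigmoid_pos (-u))),
    one_sub_sigmoid, real_smul, ofReal_mul, logisticBeta,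
    cpow_sub _ _ (ofReal_sigmoid_ne_zero u), cpow_sub _ _ (ofReal_sigmoid_ne_zero (-u)), cpow_one,
    cpow_one]
  have := ofReal_sigmoid_ne_zero u
  have := ofReal_sigmoid_ne_zero (-u)
  field_simp

theorem integrable_logisticBeta {a c : ℂ} (ha : 0 < a.re) (hc : 0 < c.re) :
    Integrable (logisticBeta a c) := by
  have h := (intervalIntegrable_iff_integrableOn_Ioo_of_le zero_le_one).mp
    (betaIntegral_convergent ha hc)
  rw [← Real.range_sigmoid, ← Set.image_univ,
    integrableOn_image_iff_integrableOn_abs_deriv_smul MeasurableSet.univ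
      (fun u _ => (Real.hasDerivAt_sigmoid u).hasDerivWithinAt) Real.sigmoid_injective.injOn,
    integrableOn_univ] at h
  simpa only [abs_deriv_sigmoid_smul_eq_logisticBeta] using h

theorem integral_logisticBeta (a c : ℂ) : ∫ u, logisticBeta a c u = betaIntegral a c := by
  rw [betaIntegral, intervalIntegral.integral_of_le zero_le_one, integral_Ioc_eq_integral_Ioo,
    ← Real.range_sigmoid, ← Set.image_univ,
    integral_image_eq_integral_abs_deriv_smul MeasurableSet.univ
      (fun u _ => (Real.hasDerivAt_sigmoid u).hasDerivWithinAt) Real.sigmoid_injective.injOn,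
    setIntegral_univ]
  simp only [abs_deriv_sigmoid_smul_eq_logisticBeta]

theorem fourier_logisticBeta (a c : ℂ) (ξ : ℝ) :
    𝓕 (logisticBeta a c) ξ =
      betaIntegral (a - 2 * Real.pi * ξ * I) (c + 2 * Real.pi * ξ * I) := by
  rw [Real.fourier_real_eq_integral_exp_smul, ← integral_logisticBeta]
  congr 1 with u
  rw [show ((-2 * Real.pi * u * ξ : ℝ) : ℂ) * I = u * (-(2 * Real.pi * ξ * I)) by push_cast; ring,
    cexp_mul_eq_logisticBeta, smul_eq_mul, logisticBeta_mul]
  ring_nf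

theorem norm_betaIntegral_le (u v : ℂ) :
    ‖betaIntegral u v‖ ≤ ∫ t, Real.sigmoid t ^ u.re * Real.sigmoid (-t) ^ v.re := by
  simpa only [integral_logisticBeta, norm_logisticBeta] using
    norm_integral_le_integral_norm (μ := volume) (logisticBeta u v)

theorem betaIntegral_eq_mul_betaIntegral_add_one {u v : ℂ} (hu : 0 < u.re) (hv : 0 < v.re) :
    betaIntegral u v = (u + v) * (u + v + 1) * (u⁻¹ * v⁻¹) * betaIntegral (u + 1) (v + 1) := by
  have huv : 0 < (u + v).re := add_pos hu hv
  have add_one_pos {s : ℂ} (hs : 0 < s.re) : 0 < (s + 1).re := by simp; linarith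
  have := ne_zero_of_re_pos hu
  have := ne_zero_of_re_pos hv
  have := ne_zero_of_re_pos huv
  have := ne_zero_of_re_pos (add_one_pos huv)
  have := Gamma_ne_zero_of_re_pos huv
  rw [betaIntegral_eq_Gamma_mul_div u v hu hv,
    betaIntegral_eq_Gamma_mul_div _ _ (add_one_pos hu) (add_one_pos hv),
    show u + 1 + (v + 1) = u + v + 1 + 1 by ring]
  repeat rw [Gamma_add_one _ (by assumption)]
  field_simp

theorem integrable_inv_norm_add_mul_I_sq {b : ℂ} (hb : b.re ≠ 0) {r : ℝ} (hr : r ≠ 0) :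
    Integrable fun ξ : ℝ => (‖b + r * ξ * I‖ ^ 2)⁻¹ := by
  have h := ((integrable_inv_one_add_sq.comp_add_right (b.im / b.re)).comp_mul_left'
    (div_ne_zero hr hb)).const_mul ((b.re ^ 2)⁻¹)
  refine h.congr (.of_forall fun ξ => ?_)
  have norm_sq : ‖b + r * ξ * I‖ ^ 2 = b.re ^ 2 * (1 + (r / b.re * ξ + b.im / b.re) ^ 2) := by
    rw [← normSq_eq_norm_sq, normSq_apply]
    simp
    field_simp
    ring
  simp only [norm_sq, mul_inv]

theorem integrable_fourier_logisticBeta {a c : ℂ} (ha : 0 < a.re) (hc : 0 < c.re) :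
    Integrable (𝓕 (logisticBeta a c)) := by
  have fourier_continuous : Continuous (𝓕 (logisticBeta a c)) :=
    VectorFourier.fourierIntegral_continuous Real.continuous_fourierChar continuous_inner
      (integrable_logisticBeta ha hc)
  set B : ℝ := ∫ t, Real.sigmoid t ^ (a.re + 1) * Real.sigmoid (-t) ^ (c.re + 1)
  have two_pi_ne_zero : 2 * Real.pi ≠ 0 := by positivity
  have dominating := ((integrable_inv_norm_add_mul_I_sq ha.ne' (neg_ne_zero.mpr two_pi_ne_zero)).add
    (integrable_inv_norm_add_mul_I_sq hc.ne' two_pi_ne_zero)).const_mul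
      (‖(a + c) * (a + c + 1)‖ * B)
  refine dominating.mono' fourier_continuous.aestronglyMeasurable (.of_forall fun ξ => ?_)
  rw [fourier_logisticBeta, Pi.add_apply,
    show a - 2 * Real.pi * ξ * I = a + (-(2 * Real.pi) : ℝ) * ξ * I by push_cast; ring,
    show c + 2 * Real.pi * ξ * I = c + (2 * Real.pi : ℝ) * ξ * I by push_cast; ring]
  set x := a + (-(2 * Real.pi) : ℝ) * ξ * I with hx
  set y := c + (2 * Real.pi : ℝ) * ξ * I with hy
  have re_x : x.re = a.re := by simp [hx]
  have re_y : y.re = c.re := by simp [hy]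
  have add_xy : x + y = a + c := by rw [hx, hy]; push_cast; ring
  have beta_le : ‖betaIntegral (x + 1) (y + 1)‖ ≤ B := by
    simpa only [add_re, one_re, re_x, re_y] using norm_betaIntegral_le (x + 1) (y + 1)
  have inv_mul_inv_le : ‖x⁻¹ * y⁻¹‖ ≤ (‖x‖ ^ 2)⁻¹ + (‖y‖ ^ 2)⁻¹ := by
    rw [norm_mul, norm_inv, norm_inv, ← inv_pow, ← inv_pow]
    nlinarith [two_mul_le_add_sq ‖x‖⁻¹ ‖y‖⁻¹, sq_nonneg ‖x‖⁻¹, sq_nonneg ‖y‖⁻¹]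
  calc ‖betaIntegral x y‖
      = ‖(a + c) * (a + c + 1)‖ * ‖x⁻¹ * y⁻¹‖ * ‖betaIntegral (x + 1) (y + 1)‖ := by
        rw [betaIntegral_eq_mul_betaIntegral_add_one (re_x ▸ ha) (re_y ▸ hc), add_xy, norm_mul,
          norm_mul]
    _ ≤ ‖(a + c) * (a + c + 1)‖ * ((‖x‖ ^ 2)⁻¹ + (‖y‖ ^ 2)⁻¹) * B := by gcongr
    _ = ‖(a + c) * (a + c + 1)‖ * B * ((‖x‖ ^ 2)⁻¹ + (‖y‖ ^ 2)⁻¹) := by ring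

theorem integral_betaIntegral_mul_betaIntegral {a b c d : ℂ} (ha : 0 < a.re) (hb : 0 < b.re)
    (hc : 0 < c.re) (hd : 0 < d.re) :
    ∫ ξ : ℝ, betaIntegral (a - 2 * Real.pi * ξ * I) (c + 2 * Real.pi * ξ * I) *
        betaIntegral (b - 2 * Real.pi * ξ * I) (d + 2 * Real.pi * ξ * I) =
      betaIntegral (a + d) (c + b) := by
  have parseval := integral_fourier_smul_fourier (integrable_logisticBeta ha hc)
    (integrable_logisticBeta hb hd) (continuous_logisticBeta b d)
    (integrable_fourier_logisticBeta hb hd)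
  simpa only [fourier_logisticBeta, smul_eq_mul, logisticBeta_neg, logisticBeta_mul,
    integral_logisticBeta] using parseval

theorem ofReal_mul_VInt_zero_comp_mul {r : ℝ} (hr : 0 < r) (f : ℂ → ℂ) :
    r * VInt 0 (fun z => f (r * z)) = VInt 0 f := by
  have scaling := Measure.integral_comp_mul_left (fun t : ℝ => f (t * I)) r
  rw [abs_of_pos (inv_pos.mpr hr), real_smul] at scaling
  have : (r : ℂ) ≠ 0 := ofReal_ne_zero.mpr hr.ne'
  simp only [VInt, ofReal_zero, zero_add, ← mul_assoc, ← ofReal_mul]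
  rw [scaling, ofReal_inv]
  field_simp

theorem barnes_first_lemma {a b c d : ℂ} (ha : 0 < a.re) (hb : 0 < b.re) (hc : 0 < c.re)
    (hd : 0 < d.re) :
    (2 * Real.pi * I)⁻¹ *
        VInt 0 (fun z => Gamma (a + z) * Gamma (b + z) * Gamma (c - z) * Gamma (d - z)) =
      Gamma (a + c) * Gamma (a + d) * Gamma (b + c) * Gamma (b + d) / Gamma (a + b + c + d) := by
  have gamma_eq_beta (ξ : ℝ) :
      Gamma (a + 2 * Real.pi * ξ * I) * Gamma (b + 2 * Real.pi * ξ * I) *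
          Gamma (c - 2 * Real.pi * ξ * I) * Gamma (d - 2 * Real.pi * ξ * I) =
        Gamma (c + a) * Gamma (d + b) *
          (betaIntegral (c - 2 * Real.pi * ξ * I) (a + 2 * Real.pi * ξ * I) *
            betaIntegral (d - 2 * Real.pi * ξ * I) (b + 2 * Real.pi * ξ * I)) := by
    have beta_ca := Gamma_mul_Gamma_eq_betaIntegral (s := c - 2 * Real.pi * ξ * I)
      (t := a + 2 * Real.pi * ξ * I) (by simpa using hc) (by simpa using ha)
    have beta_db := Gamma_mul_Gamma_eq_betaIntegral (s := d - 2 * Real.pi * ξ * I)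
      (t := b + 2 * Real.pi * ξ * I) (by simpa using hd) (by simpa using hb)
    rw [sub_add_add_cancel] at beta_ca beta_db
    rw [mul_mul_mul_comm (Gamma (c + a)), ← beta_ca, ← beta_db]
    ring
  have contour (f : ℂ → ℂ) :
      (2 * Real.pi * I)⁻¹ * VInt 0 f = ∫ ξ : ℝ, f (2 * Real.pi * ξ * I) := by
    rw [← ofReal_mul_VInt_zero_comp_mul Real.two_pi_pos, VInt]
    have : (Real.pi : ℂ) ≠ 0 := ofReal_ne_zero.mpr Real.pi_ne_zero
    simp only [ofReal_zero, zero_add, ofReal_mul, ofReal_ofNat, ← mul_assoc]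
    field_simp
  simp only [contour, gamma_eq_beta]
  rw [integral_const_mul, integral_betaIntegral_mul_betaIntegral hc hd ha hb,
    betaIntegral_eq_Gamma_mul_div _ _ (add_pos hc hb) (add_pos ha hd),
    show c + b + (a + d) = a + b + c + d by ring, add_comm c a, add_comm d b, add_comm c b]
  ring

theorem GammaR_mul_mul_mul (a b c d : ℂ) :
    GammaR a * GammaR b * GammaR c * GammaR d =
      (Real.pi : ℂ) ^ (-(a + b + c + d) / 2) *
        (Gamma (a / 2) * Gamma (b / 2) * Gamma (c / 2) * Gamma (d / 2)) := by
  have hpi : (Real.pi : ℂ) ≠ 0 := ofReal_ne_zero.mpr Real.pi_ne_zero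
  rw [show -(a + b + c + d) / 2 = -a / 2 + -b / 2 + -c / 2 + -d / 2 by ring]
  simp only [cpow_add _ _ hpi, GammaR]
  ring

/-- The one-variable integral in Barnes' first lemma for `Γ_ℝ`, over the imaginary axis and with
the normalization `1 / (4πi)` under which no power of `π` appears in its evaluation. -/
def barnesIntegral (a b c d : ℂ) : ℂ :=
  (4 * (Real.pi : ℂ) * I)⁻¹ *
    VInt 0 (fun z => GammaR (a + z) * GammaR (b + z) * GammaR (c - z) * GammaR (d - z))

theorem barnesIntegral_eq {a b c d : ℂ} (ha : 0 < a.re) (hb : 0 < b.re) (hc : 0 < c.re)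
    (hd : 0 < d.re) :
    barnesIntegral a b c d =
      GammaR (a + c) * GammaR (a + d) * GammaR (b + c) * GammaR (b + d) /
        GammaR (a + b + c + d) := by
  have re_half_pos {s : ℂ} (hs : 0 < s.re) : 0 < (s / 2).re := by simpa using hs
  have gammaR_eq_gamma (z : ℂ) :
      GammaR (a + (2 : ℝ) * z) * GammaR (b + (2 : ℝ) * z) * GammaR (c - (2 : ℝ) * z) *
          GammaR (d - (2 : ℝ) * z) =
        (Real.pi : ℂ) ^ (-(a + b + c + d) / 2) * (Gamma (a / 2 + z) * Gamma (b / 2 + z) *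
          Gamma (c / 2 - z) * Gamma (d / 2 - z)) := by
    rw [GammaR_mul_mul_mul]
    push_cast
    ring_nf
  have pi_cpow_ne_zero (s : ℂ) : (Real.pi : ℂ) ^ s ≠ 0 := by simp [cpow_eq_zero_iff]
  have VInt_const_mul (k : ℂ) (f : ℂ → ℂ) : VInt 0 (fun z => k * f z) = k * VInt 0 f := by
    simp only [VInt, integral_const_mul]
    ring
  calc barnesIntegral a b c d
      = (Real.pi : ℂ) ^ (-(a + b + c + d) / 2) * ((2 * Real.pi * I)⁻¹ *
          VInt 0 (fun z => Gamma (a / 2 + z) * Gamma (b / 2 + z) * Gamma (c / 2 - z) *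
            Gamma (d / 2 - z))) := by
        rw [barnesIntegral, ← ofReal_mul_VInt_zero_comp_mul two_pos]
        simp only [gammaR_eq_gamma, VInt_const_mul]
        push_cast
        ring
    _ = (Real.pi : ℂ) ^ (-(a + b + c + d) / 2) *
          (Gamma ((a + c) / 2) * Gamma ((a + d) / 2) * Gamma ((b + c) / 2) * Gamma ((b + d) / 2) /
            Gamma ((a + b + c + d) / 2)) := by
        rw [barnes_first_lemma (re_half_pos ha) (re_half_pos hb) (re_half_pos hc) (re_half_pos hd)]
        simp only [← add_div]
    _ = GammaR (a + c) * GammaR (a + d) * GammaR (b + c) * GammaR (b + d) /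
          GammaR (a + b + c + d) := by
        rw [GammaR_mul_mul_mul, GammaR,
          show -(a + c + (a + d) + (b + c) + (b + d)) / 2 =
            -(a + b + c + d) / 2 + -(a + b + c + d) / 2 by ring,
          cpow_add _ _ (ofReal_ne_zero.mpr Real.pi_ne_zero), mul_assoc (_ ^ _),
          mul_div_mul_left _ _ (pi_cpow_ne_zero _), ← mul_div_assoc]

theorem barnesIntegral_add_mul_eq_mul_barnesIntegral_add {γ δ c c' d d' : ℂ} (hγ : 0 < γ.re)
    (hδ : 0 < δ.re) (hc : 0 < c.re) (hc' : 0 < c'.re) (hd : 0 < d.re) (hd' : 0 < d'.re) :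
    barnesIntegral (c + γ) c' (d + δ) d' * (GammaR (c + d) / GammaR (γ + δ + c + d)) =
      GammaR (c' + d') / GammaR (γ + δ + c' + d') * barnesIntegral c (c' + δ) d (d' + γ) := by
  have GammaR_ne_zero {s t : ℂ} (hs : 0 < s.re) (ht : 0 < t.re) :
      GammaR (γ + δ + s + t) ≠ 0 :=
    Gammaℝ_ne_zero_of_re_pos (add_pos (add_pos (add_pos hγ hδ) hs) ht)
  have := GammaR_ne_zero hc hd
  have := GammaR_ne_zero hc' hd'
  rw [barnesIntegral_eq (add_pos hc hγ) hc' (add_pos hd hδ) hd',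
    barnesIntegral_eq hc (add_pos hc' hδ) hd (add_pos hd' hγ),
    show c + γ + (d + δ) = γ + δ + c + d by ring,
    show c' + δ + (d' + γ) = γ + δ + c' + d' by ring,
    show c + γ + d' = c + (d' + γ) by ring,
    show c' + δ + d = c' + (d + δ) by ring,
    show c + (c' + δ) + d + (d' + γ) = c + γ + c' + (d + δ) + d' by ring]
  field_simp

theorem VIntK_prod (k : ℕ) (σ : ℕ → ℝ) (f : ℕ → ℂ → ℂ) :
    VIntK k σ (fun z => ∏ i ∈ Finset.range k, f i (z i)) =
      ∏ i ∈ Finset.range k, VInt (σ i) (f i) := by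
  simp only [VIntK, VInt, Finset.prod_range, Finset.prod_mul_distrib, Finset.prod_const,
    Finset.card_range, extR0, Fin.is_lt, dif_pos, Fin.eta]
  rw [integral_fintype_prod_volume_eq_prod
    (fun (i : Fin k) (t : ℝ) => f i ((σ i : ℂ) + (t : ℂ) * I))]

theorem prod_Icc_one_eq_prod_range {M : Type*} [CommMonoid M] (f : ℕ → M) (k : ℕ) :
    ∏ j ∈ Finset.Icc 1 k, f j = ∏ i ∈ Finset.range k, f (i + 1) := by
  rw [Finset.range_eq_Ico, Finset.prod_Ico_add' f 0 k 1, zero_add, Finset.Ico_add_one_right_eq_Icc]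

theorem inv_pow_mul_VIntK_prod_GammaR (k : ℕ) (a b c d : ℕ → ℂ) :
    ((4 * (Real.pi : ℂ) * I) ^ k)⁻¹ *
      VIntK k (fun _ => 0) (fun z =>
        ∏ j ∈ Finset.Icc 1 k, GammaR (a j + z (j - 1)) * GammaR (b j + z (j - 1)) *
          GammaR (c j - z (j - 1)) * GammaR (d j - z (j - 1))) =
      ∏ i ∈ Finset.range k, barnesIntegral (a (i + 1)) (b (i + 1)) (c (i + 1)) (d (i + 1)) := by
  simp only [prod_Icc_one_eq_prod_range, add_tsub_cancel_right]
  rw [VIntK_prod k _ (fun i z => GammaR (a (i + 1) + z) * GammaR (b (i + 1) + z) *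
    GammaR (c (i + 1) - z) * GammaR (d (i + 1) - z))]
  simp only [barnesIntegral, Finset.prod_mul_distrib, Finset.prod_const, Finset.card_range, inv_pow]

theorem prod_range_mul_eq_mul_prod_range {M : Type*} [CommMonoid M] {X Y Q : ℕ → M} (m : ℕ)
    (step : ∀ i < m, X i * Q i = Q (i + 1) * Y i) :
    (∏ i ∈ Finset.range m, X i) * Q 0 = Q m * ∏ i ∈ Finset.range m, Y i := by
  induction m with
  | zero => simp
  | succ m ih =>
    rw [Finset.prod_range_succ, Finset.prod_range_succ, mul_right_comm,
      ih fun i hi => step i (hi.trans m.lt_succ_self), mul_right_comm, mul_comm (Q m),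
      step m m.lt_succ_self, mul_assoc, mul_comm (Y m)]

/-- Barnes-type lemma (Lemma 1.7(1) of Ishii–Stade). -/
theorem barnes_iterated_identity_one
    (n : ℕ) (hn : 1 ≤ n) (γ δ : ℂ) (c d : ℕ → ℂ)
    (hγ : 0 < γ.re) (hδ : 0 < δ.re)
    (hc0 : c 0 = 0) (hd0 : d 0 = 0)
    (hc : ∀ j, 1 ≤ j → j ≤ n → 0 < (c j).re)
    (hd : ∀ j, 1 ≤ j → j ≤ n → 0 < (d j).re) :
    ((4 * (Real.pi : ℂ) * Complex.I) ^ n)⁻¹ *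
      VIntK n (fun _ => 0) (fun z =>
        ∏ j ∈ Finset.Icc 1 n,
          GammaR (c (j - 1) + γ + z (j - 1)) * GammaR (c j + z (j - 1)) *
            GammaR (d (j - 1) + δ - z (j - 1)) * GammaR (d j - z (j - 1))) =
    GammaR (c 1 + δ) * GammaR (d 1 + γ) * GammaR (γ + δ) * GammaR (c n + d n) /
        GammaR (γ + δ + c n + d n) *
      (((4 * (Real.pi : ℂ) * Complex.I) ^ (n - 1))⁻¹ *
        VIntK (n - 1) (fun _ => 0) (fun z =>
          ∏ j ∈ Finset.Icc 1 (n - 1),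
            GammaR (c j + z (j - 1)) * GammaR (c (j + 1) + δ + z (j - 1)) *
              GammaR (d j - z (j - 1)) * GammaR (d (j + 1) + γ - z (j - 1)))) := by
  obtain ⟨m, rfl⟩ := Nat.exists_eq_add_of_le' hn
  have first_integral : barnesIntegral γ (c 1) δ (d 1) =
      GammaR (c 1 + δ) * GammaR (d 1 + γ) * GammaR (γ + δ) *
        (GammaR (c 1 + d 1) / GammaR (γ + δ + c 1 + d 1)) := by
    rw [barnesIntegral_eq hγ (hc 1 le_rfl hn) hδ (hd 1 le_rfl hn), add_comm (d 1) γ,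
      add_right_comm γ δ]
    ring
  have telescope := prod_range_mul_eq_mul_prod_range m
    (Q := fun i => GammaR (c (i + 1) + d (i + 1)) / GammaR (γ + δ + c (i + 1) + d (i + 1)))
    fun i hi => barnesIntegral_add_mul_eq_mul_barnesIntegral_add hγ hδ
      (hc (i + 1) (by omega) (by omega)) (hc (i + 2) (by omega) (by omega))
      (hd (i + 1) (by omega) (by omega)) (hd (i + 2) (by omega) (by omega))
  rw [inv_pow_mul_VIntK_prod_GammaR (m + 1) (fun j => c (j - 1) + γ) c (fun j => d (j - 1) + δ) d,
    inv_pow_mul_VIntK_prod_GammaR (m + 1 - 1) c (fun j => c (j + 1) + δ) d (fun j => d (j + 1) + γ)]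
  simp only [add_tsub_cancel_right, Finset.prod_range_succ', hc0, hd0, zero_add, first_integral]
  linear_combination (GammaR (c 1 + δ) * GammaR (d 1 + γ) * GammaR (γ + δ)) * telescope

end
end

section
/- Let n ≥ 2 and x_1,…,x_{n−1} ∈ ℝ; put q_j := 1 + ∑_{p=j}^{n−1} x_p² for 1 ≤ j ≤ n−1 and q_n := 1. Let x' = (x'_{j,k}) be any real (n−1)×(n−1) upper triangular matrix with unit diagonal, and define the n×n upper triangular unit-diagonal matrix x = (x_{j,k}) by: x_{j,k} := √(q_j·q_{k+1}/(q_{j+1}·q_k))·(x'_{j,k} − ∑_{ℓ=j}^{k−1} x_ℓ·x_k·√(q_k/(q_ℓ·q_{ℓ+1}·q_{k+1}))·x'_{j,ℓ}) for 1 ≤ j < k ≤ n−1 (with the convention x'_{j,j} = 1), and x_{j,n} := ∑_{ℓ=j}^{n−1} x_{j,ℓ}·x_ℓ for 1 ≤ j ≤ n−1 (with x_{j,j} = 1). Then for every 1 ≤ m ≤ n−1: Δ_{n,m}(x) = (q_1/q_{m+1})·Δ_{n−1,m}(x'). -/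
open MeasureTheory Complex

noncomputable section

/-- `Δ_{N,m}(y)`: the sum of the squares of the `m × m` minors formed from the
top `m` rows of `y`. -/
def Delta (N m : ℕ) (hm : m ≤ N) (y : Matrix (Fin N) (Fin N) ℝ) : ℝ :=
  ∑ S ∈ (Finset.univ : Finset (Fin N)).powersetCard m,
    if h : S.card = m then
      (Matrix.det (Matrix.of fun i j : Fin m =>
        y (Fin.castLE hm i) ((S.orderIsoOfFin h j : Fin N)))) ^ 2
    else 0

/-!
By Cauchy–Binet, `Δ_{N,m}(y)` is the Gram determinant of the first `m` rows of `y`. Put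
`v = (x_1, …, x_{n-1}, -1)`, so that `q_j` is the squared length of the tail of `v` starting at `j`.
Orthogonalising the basis vectors against these tails gives an upper triangular
`(n - 1) × n` matrix `W` (a weighted Helmert matrix) with orthonormal rows, all orthogonal to `v`.
The formula for `x_{j,k}` with `k < n` says that the first `n - 1` rows of `x` agree with `D x' W`
outside the last column, where `D = diag √(q_j / q_{j+1})`; the formula for `x_{j,n}` says that they
are orthogonal to `v`, so they equal `D x' W`. As `W Wᵀ = 1`, the Gram matrix of the first `m` rows
of `x` is that of `x'` scaled by `D` on both sides, and `∏_{j ≤ m} q_j / q_{j+1}` telescopes.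
-/

section CauchyBinet

open Set.powersetCard (ofFinEmbEquiv)

variable {m : ℕ} {ι R : Type*} [Fintype ι] [LinearOrder ι] [CommRing R]

theorem ιMulti_eq_sum_det_smul (A : Matrix (Fin m) ι R) :
    exteriorPower.ιMulti R m A.row = ∑ S : Set.powersetCard ι m,
      (A.submatrix id (ofFinEmbEquiv.symm S)).det •
        exteriorPower.ιMulti_family R m (Pi.basisFun R ι) S := by
  rw [← ((Pi.basisFun R ι).exteriorPower m).sum_repr (exteriorPower.ιMulti R m A.row)]
  refine Finset.sum_congr rfl fun S _ => ?_
  rw [exteriorPower.basis_repr_apply, exteriorPower.ιMultiDual_apply_ιMulti,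
    exteriorPower.basis_apply]
  rfl

/-- The **Cauchy–Binet formula**: `(A * B).det` pairs the exterior product of the rows of `A` with
that of the columns of `B`, viewed as functionals. -/
theorem det_mul_eq_sum_powersetCard (A : Matrix (Fin m) ι R) (B : Matrix ι (Fin m) R) :
    (A * B).det = ∑ S : Set.powersetCard ι m,
      (A.submatrix id (ofFinEmbEquiv.symm S)).det *
        (B.submatrix (ofFinEmbEquiv.symm S) id).det := by
  let columns : Fin m → Module.Dual R (ι → R) := fun j => LinearMap.proj j ∘ₗ B.vecMulLinear
  have pairing_eq_det (v : Fin m → ι → R) :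
      exteriorPower.pairingDual R _ m (exteriorPower.ιMulti R m columns)
        (exteriorPower.ιMulti R m v) = (Matrix.of v * B).det :=
    exteriorPower.pairingDual_ιMulti_ιMulti columns v
  have minor_eq (S : Set.powersetCard ι m) :
      Matrix.of (Pi.basisFun R ι ∘ ofFinEmbEquiv.symm S) * B =
        B.submatrix (ofFinEmbEquiv.symm S) id := by
    ext i j
    simp [Matrix.mul_apply, Pi.single_apply]
  calc (A * B).det = _ := (pairing_eq_det A.row).symm
    _ = _ := by
      simp only [ιMulti_eq_sum_det_smul, map_sum, map_smul, exteriorPower.ιMulti_family,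
        pairing_eq_det, minor_eq, smul_eq_mul]

end CauchyBinet

section GramDeterminant

open Matrix

theorem Delta_eq_det_mul_transpose {N m : ℕ} (hm : m ≤ N) (y : Matrix (Fin N) (Fin N) ℝ) :
    Delta N m hm y =
      (y.submatrix (Fin.castLE hm) id * (y.submatrix (Fin.castLE hm) id)ᵀ).det := by
  rw [det_mul_eq_sum_powersetCard, Delta,
    Finset.sum_subtype (p := (· ∈ Set.powersetCard (Fin N) m)) _
      (by simp [Set.powersetCard.mem_iff])]
  refine Finset.sum_congr rfl fun S _ => ?_
  refine (dif_pos S.2).trans ?_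
  rw [← transpose_submatrix, det_transpose]
  exact sq _

theorem Delta_eq_prod_sq_mul_Delta {M N m : ℕ} (hm : m ≤ N) (hN : N ≤ M)
    {Y : Matrix (Fin M) (Fin M) ℝ} {X : Matrix (Fin N) (Fin N) ℝ} {r : Fin N → ℝ}
    {W : Matrix (Fin N) (Fin M) ℝ} (hW : W * Wᵀ = 1)
    (hY : Y.submatrix (Fin.castLE hN) id = diagonal r * X * W) :
    Delta M m (hm.trans hN) Y = (∏ i : Fin m, r (Fin.castLE hm i) ^ 2) * Delta N m hm X := by
  set X₀ := X.submatrix (Fin.castLE hm) id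
  set D := diagonal (r ∘ Fin.castLE hm)
  have hY₀ : Y.submatrix (Fin.castLE (hm.trans hN)) id = D * X₀ * W := by
    ext i k
    have hrow := congrFun₂ hY (Fin.castLE hm i) k
    rw [Matrix.mul_assoc, diagonal_mul] at hrow
    rw [Matrix.mul_assoc, diagonal_mul]
    exact hrow
  have hgram : (D * X₀ * W) * (D * X₀ * W)ᵀ = D * (X₀ * X₀ᵀ) * D := by
    calc (D * X₀ * W) * (D * X₀ * W)ᵀ
        = D * X₀ * (W * Wᵀ) * (X₀ᵀ * Dᵀ) := by
          simp only [transpose_mul, Matrix.mul_assoc]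
      _ = D * (X₀ * X₀ᵀ) * D := by
          simp only [hW, D, diagonal_transpose, Matrix.mul_one, Matrix.mul_assoc]
  rw [Delta_eq_det_mul_transpose, Delta_eq_det_mul_transpose, hY₀, hgram, det_mul,
    det_mul, det_diagonal, Finset.prod_pow]
  simp only [Function.comp_apply]
  ring

end GramDeterminant

section Helmert

open Finset Matrix

variable {ι R : Type*} [LinearOrder ι] [LocallyFiniteOrderTop ι]

/-- The weighted Helmert matrix of `y`, without normalisation of its rows: row `a` is proportional
to the projection of the `a`-th basis vector, within the span of the coordinates `≥ a`, onto the
orthogonal complement of `y`. -/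
def helmert [CommRing R] (y : ι → R) : Matrix ι ι R :=
  of fun a k => if a = k then ∑ p ∈ Ioi a, y p ^ 2 else if a < k then -(y a * y k) else 0

/-- The squared Euclidean length of row `a` of `helmert y`. -/
def helmertNormSq [CommRing R] (y : ι → R) (a : ι) : R :=
  (∑ p ∈ Ici a, y p ^ 2) * ∑ p ∈ Ioi a, y p ^ 2

/-- The Helmert matrix of `y` with its rows normalised; rows of length `0`, in particular the last
one, stay `0` because `0 / 0 = 0`. -/
def unitHelmert (y : ι → ℝ) : Matrix ι ι ℝ :=
  of fun a k => helmert y a k / √(helmertNormSq y a)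

section Orthogonality

variable [Fintype ι] [CommRing R] (y : ι → R)

theorem helmert_mulVec_apply (f : ι → R) (a : ι) :
    (helmert y *ᵥ f) a = (∑ p ∈ Ioi a, y p ^ 2) * f a - y a * ∑ k ∈ Ioi a, y k * f k := by
  have hterm (k : ι) : helmert y a k * f k =
      (if a = k then (∑ p ∈ Ioi a, y p ^ 2) * f a else 0) +
        if a < k then -(y a * y k * f k) else 0 := by
    rcases lt_trichotomy a k with h | rfl | h
    · simp [helmert, h, h.ne]
    · simp [helmert]
    · simp [helmert, h.ne', h.not_gt]
  simp only [mulVec, dotProduct, hterm]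
  rw [sum_add_distrib, sum_ite_eq, if_pos (mem_univ a), ← sum_filter, filter_lt_eq_Ioi,
    sum_neg_distrib, ← sub_eq_add_neg, mul_sum]
  simp only [mul_assoc]

theorem helmert_mulVec_self : helmert y *ᵥ y = 0 := by
  ext a
  simp only [helmert_mulVec_apply, ← sq, Pi.zero_apply]
  ring

/-- On the support of row `b`, row `a` is proportional to `y`, which is orthogonal to row `b`. -/
theorem helmert_row_dotProduct_row_of_lt {a b : ι} (hab : a < b) :
    (helmert y).row a ⬝ᵥ (helmert y).row b = 0 := by
  have htail : ∑ k ∈ Ioi a, y k * (helmert y).row b k = (helmert y *ᵥ y) b := by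
    rw [mulVec, dotProduct_comm]
    refine sum_subset (subset_univ _) fun k _ hk => ?_
    have hkb : k < b := (not_lt.mp (mem_Ioi.not.mp hk)).trans_lt hab
    simp [helmert, hkb.ne', hkb.not_gt]
  change (helmert y *ᵥ (helmert y).row b) a = 0
  rw [helmert_mulVec_apply, htail, helmert_mulVec_self]
  simp [helmert, hab.ne', hab.not_gt]

theorem helmert_row_dotProduct_self (a : ι) :
    (helmert y).row a ⬝ᵥ (helmert y).row a = helmertNormSq y a := by
  have htail : ∑ k ∈ Ioi a, y k * (helmert y).row a k = -(y a * ∑ k ∈ Ioi a, y k ^ 2) := by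
    rw [mul_sum, ← sum_neg_distrib]
    refine sum_congr rfl fun k hk => ?_
    have hak := mem_Ioi.mp hk
    simp only [row_apply, helmert, of_apply, hak, hak.ne, if_true, if_false]
    ring
  change (helmert y *ᵥ (helmert y).row a) a = _
  rw [helmert_mulVec_apply, htail, helmertNormSq, ← Ioi_insert, sum_insert (by simp)]
  simp only [row_apply, helmert, of_apply, if_true]
  ring

theorem helmert_mul_transpose : helmert y * (helmert y)ᵀ = diagonal (helmertNormSq y) := by
  ext a b
  change (helmert y).row a ⬝ᵥ (helmert y).row b = _
  rcases lt_trichotomy a b with h | rfl | h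
  · rw [helmert_row_dotProduct_row_of_lt y h, diagonal_apply_ne _ h.ne]
  · rw [helmert_row_dotProduct_self, diagonal_apply_eq]
  · rw [dotProduct_comm, helmert_row_dotProduct_row_of_lt y h, diagonal_apply_ne _ h.ne']

end Orthogonality

section Normalised

variable {κ : Type*} (y : ι → ℝ)

theorem unitHelmert_eq_diagonal_mul [Fintype ι] :
    unitHelmert y = diagonal (fun a => (√(helmertNormSq y a))⁻¹) * helmert y := by
  ext a k
  rw [diagonal_mul, unitHelmert, of_apply, div_eq_inv_mul]

theorem unitHelmert_mulVec_self [Fintype ι] : unitHelmert y *ᵥ y = 0 := by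
  rw [unitHelmert_eq_diagonal_mul, ← mulVec_mulVec, helmert_mulVec_self, mulVec_zero]

theorem unitHelmert_mul_transpose [Fintype ι] :
    unitHelmert y * (unitHelmert y)ᵀ =
      diagonal fun a => helmertNormSq y a / √(helmertNormSq y a) ^ 2 := by
  rw [unitHelmert_eq_diagonal_mul, transpose_mul, diagonal_transpose, Matrix.mul_assoc,
    ← Matrix.mul_assoc (helmert y), helmert_mul_transpose, diagonal_mul_diagonal,
    diagonal_mul_diagonal]
  congr 1
  ext a
  ring

theorem unitHelmert_submatrix_mul_transpose [Fintype ι] [DecidableEq κ] {e : κ → ι}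
    (he : Function.Injective e) (hpos : ∀ a, 0 < helmertNormSq y (e a)) :
    (unitHelmert y).submatrix e id * ((unitHelmert y).submatrix e id)ᵀ = 1 := by
  rw [transpose_submatrix, ← submatrix_mul _ _ _ _ _ Function.bijective_id,
    unitHelmert_mul_transpose, submatrix_diagonal _ _ he, ← diagonal_one]
  congr 1
  ext a
  rw [Function.comp_apply, Real.sq_sqrt (hpos a).le, div_self (hpos a).ne']

theorem vecMul_unitHelmert_submatrix_apply [Fintype κ] [LinearOrder κ] [LocallyFiniteOrderBot κ]
    (e : κ ↪o ι) (g : κ → ℝ) (k : κ) :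
    (g ᵥ* (unitHelmert y).submatrix e id) (e k) =
      g k * ((∑ p ∈ Ioi (e k), y p ^ 2) / √(helmertNormSq y (e k))) -
        y (e k) * ∑ l ∈ Iio k, g l * (y (e l) / √(helmertNormSq y (e l))) := by
  have hterm (l : κ) : g l * unitHelmert y (e l) (e k) =
      (if l = k then g k * ((∑ p ∈ Ioi (e k), y p ^ 2) / √(helmertNormSq y (e k))) else 0) -
        if l < k then y (e k) * (g l * (y (e l) / √(helmertNormSq y (e l)))) else 0 := by
    rcases lt_trichotomy l k with h | rfl | h
    · simp only [unitHelmert, helmert, of_apply, e.lt_iff_lt, e.injective.eq_iff, h, h.ne,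
        if_true, if_false]
      ring
    · simp [unitHelmert, helmert]
    · simp [unitHelmert, helmert, h.ne', h.not_gt]
  simp only [vecMul, dotProduct, submatrix_apply, id, hterm]
  rw [sum_sub_distrib, sum_ite_eq', if_pos (mem_univ k), ← sum_filter, filter_gt_eq_Iio, mul_sum]

end Normalised

end Helmert

section Lift

open Finset Matrix

theorem div_sqrt_mul_self {a b : ℝ} (ha : 0 ≤ a) : b / √(a * b) = √(b / a) := by
  rw [Real.sqrt_mul ha, Real.sqrt_div' b ha, div_mul_eq_div_div_swap, Real.div_sqrt]

theorem sum_fin_eq_sum_Icc {M : Type*} [AddCommMonoid M] (n : ℕ) (f : ℕ → M) :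
    ∑ i : Fin n, f (i + 1) = ∑ i ∈ Icc 1 n, f i := by
  rw [Fin.sum_univ_eq_sum_range (fun i => f (i + 1)), range_eq_Ico, sum_Ico_add' f 0 n 1]
  rfl

theorem sum_Iio_fin_eq_sum_Icc {M : Type*} [AddCommMonoid M] {n : ℕ} (k : Fin n) (f : ℕ → M) :
    ∑ l ∈ Iio k, f (l + 1) = ∑ l ∈ Icc 1 (k : ℕ), f l := by
  rw [← sum_fin_eq_sum_Icc, Fin.sum_univ_eq_sum_range (fun l => f (l + 1)), ← Nat.Iio_eq_range,
    ← Fin.map_valEmbedding_Iio, sum_map]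
  rfl

/-- The paper's `q_j`, with `N = n - 1`. -/
def tailSum (N : ℕ) (x : ℕ → ℝ) (j : ℕ) : ℝ := 1 + ∑ p ∈ Icc j N, x p ^ 2

/-- The paper's `x_{j,k}` for `j < k ≤ N`, with `N = n - 1`. -/
def liftUpper (N : ℕ) (x : ℕ → ℝ) (x' : ℕ → ℕ → ℝ) (j k : ℕ) : ℝ :=
  √(tailSum N x j * tailSum N x (k + 1) / (tailSum N x (j + 1) * tailSum N x k)) *
    (x' j k - ∑ l ∈ Icc j (k - 1), x l * x k *
      √(tailSum N x k / (tailSum N x l * tailSum N x (l + 1) * tailSum N x (k + 1))) * x' j l)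

/-- The paper's `x_{j,k}` for all `1 ≤ j, k ≤ N + 1 = n`. -/
def liftEntry (N : ℕ) (x : ℕ → ℝ) (x' : ℕ → ℕ → ℝ) (j k : ℕ) : ℝ :=
  if j = k then 1
  else if k < j then 0
  else if k ≤ N then liftUpper N x x' j k
  else if k = N + 1 then ∑ l ∈ Icc j N, (if l = j then 1 else liftUpper N x x' j l) * x l
  else 0

/-- The matrix with entries `f j k`, `1 ≤ j, k ≤ N`. -/
def oneBasedMatrix (N : ℕ) (f : ℕ → ℕ → ℝ) : Matrix (Fin N) (Fin N) ℝ :=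
  of fun i j => f (i + 1) (j + 1)

/-- The vector `(x_1, …, x_N, -1)`. Its closed tails have squared length `q_j`, and `x_{j,n}` is
determined by the row `j` of the lifted matrix being orthogonal to it. -/
def augmentedVec (N : ℕ) (x : ℕ → ℝ) : Fin (N + 1) → ℝ :=
  Fin.snoc (fun i : Fin N => x (i + 1)) (-1)

variable (N : ℕ) (x : ℕ → ℝ)

theorem tailSum_pos (j : ℕ) : 0 < tailSum N x j := by
  unfold tailSum
  positivity

theorem sum_Ici_augmentedVec_sq (i : Fin (N + 1)) :
    ∑ p ∈ Ici i, augmentedVec N x p ^ 2 = tailSum N x (i + 1) := by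
  have hfilter : {p ∈ Icc 1 N | (i : ℕ) + 1 ≤ p} = Icc ((i : ℕ) + 1) N := by
    ext p
    grind
  rw [tailSum, ← filter_le_eq_Ici, sum_filter, Fin.sum_univ_castSucc, add_comm, ← hfilter,
    sum_filter, ← sum_fin_eq_sum_Icc]
  simp [augmentedVec, Fin.le_def, i.is_le]

theorem sum_Ioi_augmentedVec_sq (i : Fin N) :
    ∑ p ∈ Ioi i.castSucc, augmentedVec N x p ^ 2 = tailSum N x (i + 2) := by
  have hIoi : Ioi i.castSucc = Ici i.succ := by
    ext p
    simp [Fin.castSucc_lt_iff_succ_le]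
  rw [hIoi, sum_Ici_augmentedVec_sq, Fin.val_succ]

theorem augmentedVec_castSucc (i : Fin N) : augmentedVec N x i.castSucc = x (i + 1) :=
  Fin.snoc_castSucc _ _ i

theorem helmertNormSq_augmentedVec (i : Fin N) :
    helmertNormSq (augmentedVec N x) i.castSucc =
      tailSum N x (i + 1) * tailSum N x (i + 2) := by
  rw [helmertNormSq, sum_Ici_augmentedVec_sq, sum_Ioi_augmentedVec_sq, Fin.val_castSucc]

theorem liftUpper_eq (x' : ℕ → ℕ → ℝ) (j k : ℕ) :
    liftUpper N x x' j k = √(tailSum N x j / tailSum N x (j + 1)) *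
      (x' j k * √(tailSum N x (k + 1) / tailSum N x k) -
        x k * ∑ l ∈ Icc j (k - 1),
          x' j l * (x l / √(tailSum N x l * tailSum N x (l + 1)))) := by
  have hq (i : ℕ) : 0 < tailSum N x i := tailSum_pos N x i
  have houter : √(tailSum N x j * tailSum N x (k + 1) / (tailSum N x (j + 1) * tailSum N x k)) =
      √(tailSum N x j / tailSum N x (j + 1)) * √(tailSum N x (k + 1) / tailSum N x k) := by
    rw [← Real.sqrt_mul (div_pos (hq j) (hq (j + 1))).le, div_mul_div_comm]
  have hinner (l : ℕ) : √(tailSum N x (k + 1) / tailSum N x k) *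
      √(tailSum N x k / (tailSum N x l * tailSum N x (l + 1) * tailSum N x (k + 1))) =
        (√(tailSum N x l * tailSum N x (l + 1)))⁻¹ := by
    have hk := (hq k).ne'
    have hk' := (hq (k + 1)).ne'
    rw [← Real.sqrt_mul (div_pos (hq (k + 1)) (hq k)).le, ← Real.sqrt_inv]
    congr 1
    field_simp
  rw [liftUpper, houter, mul_assoc, mul_sub, mul_comm (x' j k), mul_sum, mul_sum]
  congr 2
  refine sum_congr rfl fun l _ => ?_
  linear_combination x l * x k * x' j l * hinner l

theorem liftEntry_eq {x' : ℕ → ℕ → ℝ} (hlow : ∀ j k, k < j → x' j k = 0)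
    {j k : ℕ} (hdiag : x' j j = 1) (hj : 1 ≤ j) (hk : k ≤ N) :
    liftEntry N x x' j k = √(tailSum N x j / tailSum N x (j + 1)) *
      (x' j k * √(tailSum N x (k + 1) / tailSum N x k) -
        x k * ∑ l ∈ Icc j (k - 1),
          x' j l * (x l / √(tailSum N x l * tailSum N x (l + 1)))) := by
  rcases lt_trichotomy j k with h | rfl | h
  · rw [← liftUpper_eq, liftEntry, if_neg h.ne, if_neg h.not_gt, if_pos hk]
  · have hq := tailSum_pos N x j
    have hq' := tailSum_pos N x (j + 1)
    rw [liftEntry, if_pos rfl, hdiag, Icc_eq_empty (by omega), sum_empty, mul_zero, sub_zero,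
      one_mul, ← Real.sqrt_mul (div_pos hq hq').le, div_mul_div_cancel₀ hq'.ne', div_self hq.ne',
      Real.sqrt_one]
  · rw [liftEntry, if_neg h.ne', if_pos h, hlow j k h, Icc_eq_empty (by omega), sum_empty,
      mul_zero, zero_mul, sub_zero, mul_zero]

theorem liftEntry_last (x' : ℕ → ℕ → ℝ) {j : ℕ} (hj : 1 ≤ j) (hjN : j ≤ N) :
    liftEntry N x x' j (N + 1) = ∑ k ∈ Icc 1 N, liftEntry N x x' j k * x k := by
  rw [liftEntry, if_neg (by omega), if_neg (by omega), if_neg (by omega), if_pos rfl]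
  refine sum_subset_zero_on_sdiff (Icc_subset_Icc_left hj) (fun k hk => ?_) (fun k hk => ?_)
  · simp only [mem_sdiff, mem_Icc] at hk
    rw [liftEntry, if_neg (by omega), if_pos (by omega), zero_mul]
  · obtain ⟨hjk, hkN⟩ := mem_Icc.mp hk
    rcases hjk.eq_or_lt with rfl | h
    · rw [if_pos rfl, liftEntry, if_pos rfl]
    · rw [if_neg h.ne', liftEntry, if_neg h.ne, if_neg h.not_gt, if_pos hkN]

theorem vecMul_unitHelmert_augmentedVec {g : ℕ → ℝ} {j : ℕ} (hj : 1 ≤ j)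
    (hg : ∀ l < j, g l = 0) (k : Fin N) :
    ((fun l : Fin N => g (l + 1)) ᵥ*
        (unitHelmert (augmentedVec N x)).submatrix Fin.castSucc id) k.castSucc =
      g (k + 1) * √(tailSum N x (k + 2) / tailSum N x (k + 1)) -
        x (k + 1) * ∑ l ∈ Icc j (k : ℕ),
          g l * (x l / √(tailSum N x l * tailSum N x (l + 1))) := by
  have hsub : ∑ l ∈ Icc j (k : ℕ), g l * (x l / √(tailSum N x l * tailSum N x (l + 1))) =
      ∑ l ∈ Icc 1 (k : ℕ), g l * (x l / √(tailSum N x l * tailSum N x (l + 1))) := by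
    refine sum_subset (Icc_subset_Icc_left hj) fun l hl hl' => ?_
    rw [hg l (by grind), zero_mul]
  have hvec := vecMul_unitHelmert_submatrix_apply (augmentedVec N x) Fin.castSuccOrderEmb
    (fun l : Fin N => g (l + 1)) k
  simp only [Fin.castSuccOrderEmb_apply, helmertNormSq_augmentedVec, sum_Ioi_augmentedVec_sq,
    augmentedVec_castSucc, div_sqrt_mul_self (tailSum_pos N x _).le] at hvec
  rw [hsub, ← sum_Iio_fin_eq_sum_Icc]
  exact hvec

theorem mulVec_augmentedVec_apply {m : Type*} (A : Matrix m (Fin (N + 1)) ℝ) (i : m) :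
    (A *ᵥ augmentedVec N x) i =
      ∑ k : Fin N, A i k.castSucc * x (k + 1) - A i (Fin.last N) := by
  rw [mulVec, dotProduct, Fin.sum_univ_castSucc]
  simp [augmentedVec, sub_eq_add_neg]

variable {N x} in
theorem eq_of_mulVec_augmentedVec_eq {m : Type*} {A B : Matrix m (Fin (N + 1)) ℝ}
    (hvec : A *ᵥ augmentedVec N x = B *ᵥ augmentedVec N x)
    (hcol : ∀ i (k : Fin N), A i k.castSucc = B i k.castSucc) : A = B := by
  ext i k
  refine Fin.lastCases ?_ (hcol i) k
  simpa [mulVec_augmentedVec_apply, hcol] using congrFun hvec i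

theorem liftMatrix_submatrix_mulVec (x' : ℕ → ℕ → ℝ) :
    (oneBasedMatrix (N + 1) (liftEntry N x x')).submatrix Fin.castSucc id *ᵥ augmentedVec N x =
      0 := by
  ext i
  rw [mulVec_augmentedVec_apply, Pi.zero_apply, sub_eq_zero]
  exact (sum_fin_eq_sum_Icc N fun k => liftEntry N x x' (i + 1) k * x k).trans
    (liftEntry_last N x x' (by omega) (by omega)).symm

theorem liftMatrix_submatrix_eq {x' : ℕ → ℕ → ℝ} (hdiag : ∀ j, 1 ≤ j → j ≤ N → x' j j = 1)
    (hlow : ∀ j k, k < j → x' j k = 0) :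
    (oneBasedMatrix (N + 1) (liftEntry N x x')).submatrix Fin.castSucc id =
      diagonal (fun i : Fin N => √(tailSum N x (i + 1) / tailSum N x (i + 2))) *
        oneBasedMatrix N x' * (unitHelmert (augmentedVec N x)).submatrix Fin.castSucc id := by
  have hW : (unitHelmert (augmentedVec N x)).submatrix Fin.castSucc id *ᵥ augmentedVec N x = 0 := by
    ext i
    exact congrFun (unitHelmert_mulVec_self (augmentedVec N x)) i.castSucc
  refine eq_of_mulVec_augmentedVec_eq (x := x) ?_ fun i k => ?_
  · rw [liftMatrix_submatrix_mulVec, ← mulVec_mulVec, hW, mulVec_zero]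
  · rw [Matrix.mul_assoc, diagonal_mul]
    refine (liftEntry_eq N x hlow (hdiag (i + 1) (by omega) (by omega)) (by omega)
      (show (k : ℕ) + 1 ≤ N by omega)).trans ?_
    exact congrArg _ (vecMul_unitHelmert_augmentedVec N x (by omega) (hlow (i + 1)) k).symm

theorem prod_sq_sqrt_tailSum_div (m : ℕ) :
    ∏ i : Fin m, √(tailSum N x (i + 1) / tailSum N x (i + 2)) ^ 2 =
      tailSum N x 1 / tailSum N x (m + 1) := by
  have hq (j : ℕ) : 0 < tailSum N x j := tailSum_pos N x j
  simp only [Real.sq_sqrt (div_pos (hq _) (hq _)).le]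
  induction m with
  | zero => simp [(hq 1).ne']
  | succ m ih =>
    rw [Fin.prod_univ_castSucc]
    simp only [Fin.val_castSucc, Fin.val_last, ih]
    exact div_mul_div_cancel₀ (hq (m + 1)).ne'

end Lift

/-- The key claim in the proof of Proposition 1.4 of Ishii–Stade. -/
theorem delta_minor_identity (n : ℕ) (hn : 2 ≤ n) (x : ℕ → ℝ) (x' : ℕ → ℕ → ℝ)
    (hdiag : ∀ j, 1 ≤ j → j ≤ n - 1 → x' j j = 1)
    (hlow : ∀ j k, k < j → x' j k = 0) :
    let Q : ℕ → ℝ := fun j => 1 + ∑ p ∈ Finset.Icc j (n - 1), x p ^ 2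
    let Xup : ℕ → ℕ → ℝ := fun j k =>
      Real.sqrt (Q j * Q (k + 1) / (Q (j + 1) * Q k)) *
        (x' j k - ∑ ℓ ∈ Finset.Icc j (k - 1),
          x ℓ * x k * Real.sqrt (Q k / (Q ℓ * Q (ℓ + 1) * Q (k + 1))) * x' j ℓ)
    let XE : ℕ → ℕ → ℝ := fun j k =>
      if j = k then 1
      else if k < j then 0
      else if k ≤ n - 1 then Xup j k
      else if k = n then ∑ ℓ ∈ Finset.Icc j (n - 1), (if ℓ = j then 1 else Xup j ℓ) * x ℓ
      else 0
    let xmat : Matrix (Fin n) (Fin n) ℝ := Matrix.of fun i j => XE ((i : ℕ) + 1) ((j : ℕ) + 1)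
    let x'mat : Matrix (Fin (n - 1)) (Fin (n - 1)) ℝ :=
      Matrix.of fun i j => x' ((i : ℕ) + 1) ((j : ℕ) + 1)
    ∀ m : ℕ, ∀ _h1 : 1 ≤ m, ∀ h2 : m ≤ n - 1,
      Delta n m (le_trans h2 (Nat.sub_le n 1)) xmat =
        Q 1 / Q (m + 1) * Delta (n - 1) m h2 x'mat := by
  obtain ⟨N, rfl⟩ : ∃ N, n = N + 1 := ⟨n - 1, by omega⟩
  intro _ _ _ _ _ m _ hmN
  change m ≤ N at hmN
  have hW : (unitHelmert (augmentedVec N x)).submatrix Fin.castSucc id *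
      ((unitHelmert (augmentedVec N x)).submatrix Fin.castSucc id).transpose = 1 :=
    unitHelmert_submatrix_mul_transpose _ (Fin.castSucc_injective N) fun i => by
      rw [helmertNormSq_augmentedVec]
      exact mul_pos (tailSum_pos N x _) (tailSum_pos N x _)
  refine (Delta_eq_prod_sq_mul_Delta hmN N.le_succ hW
    (liftMatrix_submatrix_eq N x hdiag hlow)).trans ?_
  simp only [Fin.val_castLE]
  rw [prod_sq_sqrt_tailSum_div]
  rfl

end
end

section
/- Let n ≥ 2 and a = (a_1,…,a_n) ∈ ℂ^n with each a_j purely imaginary, and let s_1,…,s_{n−1} ∈ ℂ with Re(s_j) > 0 for all j. Then U_{n,a}(s_{n−1}−|a|, s_{n−2}−|a|, …, s_1−|a|) = U_{n,−a}(s_1,…,s_{n−1}), where −a := (−a_1,…,−a_n). -/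
open MeasureTheory Complex

noncomputable section

/-!
The statement is the Mellin transform of the pointwise identity
`Ŵ_{n,-a}(y_1,…,y_{n-1}) = (y_1⋯y_{n-1})^{-|a|} Ŵ_{n,a}(y_{n-1},…,y_1)`. For `n = 2` this is
`K_{-ν} = K_ν`. For larger `n` substitute `t_j = 1 / ((π y_j)² u_j)` in the recursion: this
preserves the measures `dt_j / t_j`, exchanges the two terms of each exponent
`-(π y_j)² t_j - 1 / t_j`, and turns `y_{j+1} √(t_{j+1} / t_j)` into `y_j √(u_j / u_{j+1})`. The
identity for `n - 1` reverses these arguments, which leaves the recursion for the reversed tuples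
`y` and `u`.
-/

section ChangeOfVariables

variable {E : Type*} [NormedAddCommGroup E] [NormedSpace ℝ E]

theorem setIntegral_pi_image_eq_setIntegral_abs_prod_deriv_smul {ι : Type*} [Fintype ι]
    {s : ι → Set ℝ} (hs : ∀ i, MeasurableSet (s i)) {g g' : ι → ℝ → ℝ}
    (hg' : ∀ i, ∀ x ∈ s i, HasDerivWithinAt (g i) (g' i x) (s i) x)
    (hg : ∀ i, Set.InjOn (g i) (s i)) (F : (ι → ℝ) → E) :
    ∫ t in Set.univ.pi fun i => g i '' s i, F t =
      ∫ v in Set.univ.pi s, |∏ i, g' i (v i)| • F fun i => g i (v i) := by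
  have hderiv : ∀ v ∈ Set.univ.pi s, HasFDerivWithinAt (Pi.map g)
      (ContinuousLinearMap.pi fun i =>
        (ContinuousLinearMap.toSpanSingleton ℝ (g' i (v i))).comp (ContinuousLinearMap.proj i))
      (Set.univ.pi s) v := fun v hv =>
    hasFDerivWithinAt_pi.mpr fun i =>
      (hg' i _ (hv i trivial)).hasFDerivWithinAt.comp v (hasFDerivWithinAt_apply i v _)
        fun _ hw => hw i trivial
  have hinj : Set.InjOn (Pi.map g) (Set.univ.pi s) := fun v hv w hw h =>
    funext fun i => hg i (hv i trivial) (hw i trivial) (congrFun h i)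
  rw [← Set.piMap_image_univ_pi, integral_image_eq_integral_abs_det_fderiv_smul volume
    (MeasurableSet.univ_pi hs) hderiv hinj]
  simp only [ContinuousLinearMap.det_pi, ContinuousLinearMap.det_toSpanSingleton]
  rfl

lemma posSet_eq_pi (k : ℕ) : posSet k = Set.univ.pi fun _ => Set.Ioi 0 := by
  ext t
  simp only [posSet, Set.mem_ofPred_eq, Set.mem_univ_pi, Set.mem_Ioi]

lemma measurableSet_posSet (k : ℕ) : MeasurableSet (posSet k) := by
  rw [posSet_eq_pi]
  exact MeasurableSet.univ_pi fun _ => measurableSet_Ioi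

theorem setIntegral_posSet_comp_perm {k : ℕ} (σ : Equiv.Perm (Fin k)) (F : (Fin k → ℝ) → E) :
    ∫ t in posSet k, F (t ∘ σ) = ∫ t in posSet k, F t := by
  have hpre : (· ∘ σ) ⁻¹' posSet k = posSet k := by
    ext t
    exact σ.forall_congr_right (q := fun j => 0 < t j)
  have hσ := (volume_preserving_arrowCongr' σ.symm (MeasurableEquiv.refl ℝ)
    (MeasurePreserving.id volume)).setIntegral_preimage_emb
      (MeasurableEquiv.measurableEmbedding _) F (posSet k)
  exact (congrArg (fun s => ∫ t in s, F (t ∘ σ)) hpre).symm.trans hσ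

lemma image_inv_const_mul_Ioi {c : ℝ} (hc : 0 < c) :
    (fun x => (c * x)⁻¹) '' Set.Ioi 0 = Set.Ioi 0 := by
  ext y
  refine ⟨?_, fun hy => ⟨(c * y)⁻¹, inv_pos.mpr (mul_pos hc hy), by field_simp⟩⟩
  rintro ⟨x, hx, rfl⟩
  exact inv_pos.mpr (mul_pos hc hx)

lemma hasDerivAt_inv_const_mul {c x : ℝ} (hc : c ≠ 0) (hx : x ≠ 0) :
    HasDerivAt (fun x => (c * x)⁻¹) (-(c * x ^ 2)⁻¹) x := by
  refine (((hasDerivAt_id' x).const_mul c).fun_inv (mul_ne_zero hc hx)).congr_deriv ?_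
  field_simp

theorem setIntegral_posSet_inv_smul_comp_inv_mul {k : ℕ} {c : Fin k → ℝ} (hc : ∀ j, 0 < c j)
    (F : (Fin k → ℝ) → E) :
    ∫ t in posSet k, (∏ j, t j)⁻¹ • F t =
      ∫ u in posSet k, (∏ j, u j)⁻¹ • F fun j => (c j * u j)⁻¹ := by
  have himage : posSet k = Set.univ.pi fun j => (fun x => (c j * x)⁻¹) '' Set.Ioi 0 := by
    simp only [posSet_eq_pi, image_inv_const_mul_Ioi (hc _)]
  have hinj : ∀ j, Set.InjOn (fun x => (c j * x)⁻¹) (Set.Ioi 0) := fun j _ _ _ _ h =>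
    mul_left_cancel₀ (hc j).ne' (inv_injective h)
  conv_lhs => rw [himage]
  rw [setIntegral_pi_image_eq_setIntegral_abs_prod_deriv_smul (fun _ => measurableSet_Ioi)
    (fun j x hx => (hasDerivAt_inv_const_mul (hc j).ne' (ne_of_gt hx)).hasDerivWithinAt) hinj,
    ← posSet_eq_pi]
  refine setIntegral_congr_fun (measurableSet_posSet k) fun u hu => ?_
  have hjacobian : |∏ j, -(c j * u j ^ 2)⁻¹| * (∏ j, (c j * u j)⁻¹)⁻¹ = (∏ j, u j)⁻¹ := by
    rw [Finset.abs_prod, ← Finset.prod_inv_distrib, ← Finset.prod_inv_distrib,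
      ← Finset.prod_mul_distrib]
    refine Finset.prod_congr rfl fun j _ => ?_
    have hcj := hc j
    have huj := hu j
    rw [abs_neg, abs_of_pos (by positivity)]
    field_simp
  simp only [smul_smul, hjacobian]

end ChangeOfVariables

lemma extR_of_lt {k : ℕ} (t : Fin k → ℝ) {i : ℕ} (h : i < k) : extR t i = t ⟨i, h⟩ :=
  dif_pos h

lemma extR_pos {k : ℕ} {t : Fin k → ℝ} (ht : t ∈ posSet k) (i : ℕ) : 0 < extR t i := by
  unfold extR
  split_ifs with h
  · exact ht _
  · exact one_pos

lemma extR_comp_rev {k : ℕ} (t : Fin k → ℝ) {i : ℕ} (h : i < k) :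
    extR (t ∘ Fin.revPerm) i = extR t (k - 1 - i) := by
  rw [extR_of_lt _ h, extR_of_lt _ (by omega : k - 1 - i < k)]
  exact congrArg t (Fin.ext (by simp only [Fin.revPerm_apply, Fin.val_rev]; omega))

lemma BesselK_eq_mellin (ν : ℂ) (y : ℝ) :
    BesselK ν y =
      1 / 2 * mellin (fun t => Complex.exp (-((y : ℂ) / 2) * ((t : ℂ) + 1 / (t : ℂ)))) ν := by
  unfold BesselK mellin
  congr 1
  refine setIntegral_congr_fun measurableSet_Ioi fun t ht => ?_
  have ht0 : (t : ℂ) ≠ 0 := Complex.ofReal_ne_zero.mpr (ne_of_gt ht)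
  simp only [smul_eq_mul, Complex.cpow_sub _ _ ht0, Complex.cpow_one]
  ring

theorem BesselK_neg (ν : ℂ) (y : ℝ) : BesselK (-ν) y = BesselK ν y := by
  rw [BesselK_eq_mellin, BesselK_eq_mellin, ← mellin_comp_inv]
  simp only [Complex.ofReal_inv, one_div, inv_inv, add_comm]

lemma ofReal_cpow_eq_exp_log_mul {x : ℝ} (hx : 0 < x) (z : ℂ) :
    (x : ℂ) ^ z = Complex.exp (Real.log x * z) := by
  rw [Complex.cpow_def_of_ne_zero (Complex.ofReal_ne_zero.mpr hx.ne'), Complex.ofReal_log hx.le]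

lemma ofReal_prod_cpow {ι : Type*} (s : Finset ι) {y : ι → ℝ} (hy : ∀ j ∈ s, 0 ≤ y j) (z : ℂ) :
    ((∏ j ∈ s, y j : ℝ) : ℂ) ^ z = ∏ j ∈ s, (y j : ℂ) ^ z := by
  induction s using Finset.cons_induction with
  | empty => simp only [Finset.prod_empty, Complex.ofReal_one, Complex.one_cpow]
  | cons i s hi ih =>
    rw [Finset.forall_mem_cons] at hy
    rw [Finset.prod_cons, Finset.prod_cons, ← ih hy.2, Complex.ofReal_mul,
      Complex.mul_cpow_ofReal_nonneg hy.1 (Finset.prod_nonneg hy.2)]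

lemma prod_range_sqrt_div {u : ℕ → ℝ} (hu : ∀ j, 0 < u j) (n : ℕ) :
    ∏ j ∈ Finset.range n, √(u j / u (j + 1)) = √(u 0 / u n) := by
  refine Finset.prod_range_induction _ (fun k => √(u 0 / u k)) ?_ n fun k _ => ?_
  · rw [div_self (hu 0).ne', Real.sqrt_one]
  · rw [← Real.sqrt_mul (div_pos (hu _) (hu _)).le, div_mul_div_cancel₀ (hu k).ne']

lemma tildeA_neg (n : ℕ) (a : ℕ → ℂ) : tildeA n (-a) = -tildeA n a := by
  funext j
  simp only [tildeA, Pi.neg_apply]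
  ring

lemma sumA_neg (n : ℕ) (a : ℕ → ℂ) : sumA n (-a) = -sumA n a :=
  Finset.sum_neg_distrib _

lemma sumA_tildeA (n : ℕ) (a : ℕ → ℂ) : sumA (n + 1) (tildeA (n + 2) a) = sumA (n + 2) a := by
  have hn : (n : ℂ) + 1 ≠ 0 := n.cast_add_one_ne_zero
  simp only [sumA, tildeA, Finset.sum_add_distrib, Finset.sum_const, Finset.card_range,
    nsmul_eq_mul, Finset.sum_range_succ' _ (n + 1)]
  push_cast
  rw [show (n : ℂ) + 2 - 1 = n + 1 by ring, mul_div_cancel₀ _ hn]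

/-- The integrand of `∫ exp (-x² t - 1/t) x^p t^q dt/t`, a normalized `K`-Bessel integral, with
respect to `dt/t`. -/
def besselIntegrand (p q : ℂ) (x t : ℝ) : ℂ :=
  Complex.exp (-x ^ 2 * t - 1 / t : ℝ) * (x : ℂ) ^ p * (t : ℂ) ^ q

lemma besselIntegrand_inv_sq_mul (p q : ℂ) {x u : ℝ} (hx : 0 < x) (hu : 0 < u) :
    besselIntegrand p (-q) x (x ^ 2 * u)⁻¹ = besselIntegrand (p + 2 * q) q x u := by
  have hexp : -x ^ 2 * (x ^ 2 * u)⁻¹ - 1 / (x ^ 2 * u)⁻¹ = -x ^ 2 * u - 1 / u := by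
    field_simp
    ring
  have hlog : Real.log (x ^ 2 * u)⁻¹ = -(2 * Real.log x + Real.log u) := by
    rw [Real.log_inv, Real.log_mul (by positivity) hu.ne', Real.log_pow, Nat.cast_ofNat]
  simp only [besselIntegrand, hexp, mul_assoc]
  rw [ofReal_cpow_eq_exp_log_mul hx, ofReal_cpow_eq_exp_log_mul hx, ofReal_cpow_eq_exp_log_mul hu,
    ofReal_cpow_eq_exp_log_mul (by positivity), hlog]
  simp only [← Complex.exp_add]
  push_cast
  ring_nf

/-- The product of the factors `exp (-x_j² t_j - 1/t_j) x_j^{(m-j) α / m} t_j^{(m+1) α / (2m)}` of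
the recursion for `Ŵ_{m+1,a}`, where `x_j = π y_{j+1}` and `α = a_1` (`j` is 0-based). -/
def besselProduct (m : ℕ) (α : ℂ) (x t : ℕ → ℝ) : ℂ :=
  ∏ j ∈ Finset.range m,
    besselIntegrand (((m - j : ℕ) : ℂ) * α / (m : ℂ)) (((m + 1 : ℕ) : ℂ) * α / (2 * (m : ℂ)))
      (x j) (t j)

lemma besselProduct_neg_inv_sq_mul (m : ℕ) (α : ℂ) {x u : ℕ → ℝ} (hx : ∀ j, 0 < x j)
    (hu : ∀ j, 0 < u j) :
    besselProduct m (-α) x (fun j => (x j ^ 2 * u j)⁻¹) =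
      besselProduct m α (fun j => x (m - 1 - j)) fun j => u (m - 1 - j) := by
  unfold besselProduct
  rw [← Finset.prod_range_reflect]
  refine Finset.prod_congr rfl fun j hj => ?_
  have hjm : j < m := Finset.mem_range.mp hj
  have hindex : ((m - (m - 1 - j) : ℕ) : ℂ) + ((m - j : ℕ) : ℂ) = ((m + 1 : ℕ) : ℂ) := by
    rw [← Nat.cast_add]
    congr 1
    omega
  rw [mul_neg, mul_neg, neg_div, neg_div, besselIntegrand_inv_sq_mul _ _ (hx _) (hu _), ← hindex]
  congr 1
  ring

lemma besselProduct_congr {m : ℕ} (α : ℂ) {x x' t t' : ℕ → ℝ} (hx : ∀ j < m, x j = x' j)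
    (ht : ∀ j < m, t j = t' j) : besselProduct m α x t = besselProduct m α x' t' :=
  Finset.prod_congr rfl fun j hj => by
    rw [hx j (Finset.mem_range.mp hj), ht j (Finset.mem_range.mp hj)]

/-- The integrand of the recursion defining `Ŵ_{n+3,a}(y)`, with respect to `∏ j, dt_j / t_j`. -/
def whittKernel (n : ℕ) (a : ℕ → ℂ) (y t : ℕ → ℝ) : ℂ :=
  WhittAr (n + 2) (tildeA (n + 3) a) (fun j => y (j + 1) * √(t (j + 1) / t j)) *
    besselProduct (n + 2) (a 0) (fun j => Real.pi * y j) t *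
    ((Real.pi * t (n + 1) : ℝ) : ℂ) ^ (-sumA (n + 3) a / 2)

lemma WhittAr_eq_setIntegral_whittKernel (n : ℕ) (a : ℕ → ℂ) (y : ℕ → ℝ) :
    WhittAr (n + 3) a y =
      ∫ t in posSet (n + 2), (∏ j, t j)⁻¹ • whittKernel n a y (extR t) := by
  rw [WhittAr]
  congr 1
  funext t
  have hprod : ∏ j ∈ Finset.range (n + 2), (extR t j : ℂ) = ((∏ j, t j : ℝ) : ℂ) := by
    rw [Finset.prod_range, Complex.ofReal_prod]
    exact Finset.prod_congr rfl fun j _ => by rw [extR_of_lt t j.2]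
  rw [hprod, mul_comm, Complex.real_smul, Complex.ofReal_inv]
  rfl

lemma WhittAr_congr : ∀ {n : ℕ} (a : ℕ → ℂ) {y z : ℕ → ℝ}, (∀ j < n - 1, y j = z j) →
    WhittAr n a y = WhittAr n a z
  | 0, _, _, _, _ => rfl
  | 1, _, _, _, _ => rfl
  | 2, _, _, _, h => by simp only [WhittAr, h 0 one_pos]
  | n + 3, a, y, z, h => by
    have hWhitt (t : ℕ → ℝ) := WhittAr_congr (n := n + 2) (tildeA (n + 3) a)
      (y := fun j => y (j + 1) * √(t (j + 1) / t j))
      (z := fun j => z (j + 1) * √(t (j + 1) / t j)) fun j hj => by rw [h (j + 1) (by omega)]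
    have hBessel (t : ℕ → ℝ) := besselProduct_congr (m := n + 2) (a 0)
      (x := fun j => Real.pi * y j) (x' := fun j => Real.pi * z j) (t := t)
      (fun j hj => by rw [h j hj]) fun _ _ => rfl
    simp only [WhittAr_eq_setIntegral_whittKernel, whittKernel, hWhitt, hBessel]

lemma whittKernel_congr {n : ℕ} (a : ℕ → ℂ) (y : ℕ → ℝ) {t u : ℕ → ℝ}
    (h : ∀ j < n + 2, t j = u j) : whittKernel n a y t = whittKernel n a y u := by
  unfold whittKernel
  rw [besselProduct_congr _ (fun _ _ => rfl) h, h (n + 1) (by omega),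
    WhittAr_congr _ fun j hj => by rw [h j (by omega), h (j + 1) (by omega)]]

lemma mul_sqrt_inv_div_inv {c x z : ℝ} (hc : c ≠ 0) (hx : 0 < x) (hz : 0 < z) (u v : ℝ) :
    z * √(((c * z) ^ 2 * v)⁻¹ / ((c * x) ^ 2 * u)⁻¹) = x * √(u / v) := by
  have hratio : ((c * z) ^ 2 * v)⁻¹ / ((c * x) ^ 2 * u)⁻¹ = (x / z) ^ 2 * (u / v) := by field_simp
  rw [hratio, Real.sqrt_mul (sq_nonneg _), Real.sqrt_sq (by positivity)]
  field_simp

lemma mul_sqrt_cpow_mul_pi_mul_inv_cpow {P y u v : ℝ} (hP : 0 < P) (hy : 0 < y) (hu : 0 < u)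
    (hv : 0 < v) (S : ℂ) :
    ((P * √(u / v) : ℝ) : ℂ) ^ (-S) * ((Real.pi * ((Real.pi * y) ^ 2 * v)⁻¹ : ℝ) : ℂ) ^ (S / 2) =
      ((P * y : ℝ) : ℂ) ^ (-S) * ((Real.pi * u : ℝ) : ℂ) ^ (-S / 2) := by
  have hpi := Real.pi_pos
  have hsqrt : 0 < √(u / v) := Real.sqrt_pos.mpr (div_pos hu hv)
  have hlog_sqrt : Real.log (P * √(u / v)) = Real.log P + (Real.log u - Real.log v) / 2 := by
    rw [Real.log_mul hP.ne' hsqrt.ne', Real.log_sqrt (div_pos hu hv).le, Real.log_div hu.ne' hv.ne']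
  have hlog_inv : Real.log (Real.pi * ((Real.pi * y) ^ 2 * v)⁻¹) =
      -(Real.log Real.pi + 2 * Real.log y + Real.log v) := by
    rw [Real.log_mul hpi.ne' (by positivity), Real.log_inv, Real.log_mul (by positivity) hv.ne',
      Real.log_pow, Real.log_mul hpi.ne' hy.ne']
    push_cast
    ring
  rw [ofReal_cpow_eq_exp_log_mul (by positivity), ofReal_cpow_eq_exp_log_mul (by positivity),
    ofReal_cpow_eq_exp_log_mul (by positivity), ofReal_cpow_eq_exp_log_mul (by positivity),
    hlog_sqrt, hlog_inv, Real.log_mul hP.ne' hy.ne', Real.log_mul hpi.ne' hu.ne',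
    ← Complex.exp_add, ← Complex.exp_add]
  push_cast
  ring_nf

lemma whittKernel_neg_inv_sq_mul {n : ℕ} (a : ℕ → ℂ) {y u : ℕ → ℝ} (hy : ∀ j, 0 < y j)
    (hu : ∀ j, 0 < u j)
    (hWhitt : ∀ (b : ℕ → ℂ) (x : ℕ → ℝ), (∀ j, 0 < x j) → WhittAr (n + 2) (-b) x =
      ((∏ j ∈ Finset.range (n + 1), x j : ℝ) : ℂ) ^ (-sumA (n + 2) b) *
        WhittAr (n + 2) b fun j => x (n - j)) :
    whittKernel n (-a) y (fun j => ((Real.pi * y j) ^ 2 * u j)⁻¹) =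
      ((∏ j ∈ Finset.range (n + 2), y j : ℝ) : ℂ) ^ (-sumA (n + 3) a) *
        whittKernel n a (fun j => y (n + 1 - j)) fun j => u (n + 1 - j) := by
  have hpiy (j : ℕ) : 0 < Real.pi * y j := mul_pos Real.pi_pos (hy j)
  have hargs (j : ℕ) : y (j + 1) * √(((Real.pi * y (j + 1)) ^ 2 * u (j + 1))⁻¹ /
      ((Real.pi * y j) ^ 2 * u j)⁻¹) = y j * √(u j / u (j + 1)) :=
    mul_sqrt_inv_div_inv Real.pi_ne_zero (hy j) (hy (j + 1)) _ _
  have hargs_pos (j : ℕ) : 0 < y j * √(u j / u (j + 1)) :=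
    mul_pos (hy j) (Real.sqrt_pos.mpr (div_pos (hu _) (hu _)))
  have hreverse : WhittAr (n + 2) (tildeA (n + 3) a)
        (fun j => y (n - j) * √(u (n - j) / u (n - j + 1))) =
      WhittAr (n + 2) (tildeA (n + 3) a)
        fun j => y (n + 1 - (j + 1)) * √(u (n + 1 - (j + 1)) / u (n + 1 - j)) :=
    WhittAr_congr _ fun j hj => by
      rw [show n + 1 - (j + 1) = n - j by omega, show n + 1 - j = n - j + 1 by omega]
  have hbessel : besselProduct (n + 2) (-a 0) (fun j => Real.pi * y j)
        (fun j => ((Real.pi * y j) ^ 2 * u j)⁻¹) =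
      besselProduct (n + 2) (a 0) (fun j => Real.pi * y (n + 1 - j)) fun j => u (n + 1 - j) :=
    besselProduct_neg_inv_sq_mul (n + 2) (a 0) hpiy hu
  have hsum : sumA (n + 2) (tildeA (n + 3) a) = sumA (n + 3) a := sumA_tildeA (n + 1) a
  have hboundary := mul_sqrt_cpow_mul_pi_mul_inv_cpow
    (Finset.prod_pos fun j (_ : j ∈ Finset.range (n + 1)) => hy j) (hy (n + 1)) (hu 0) (hu (n + 1))
    (sumA (n + 3) a)
  rw [← Finset.prod_range_succ] at hboundary
  simp only [whittKernel, hargs, tildeA_neg, hWhitt _ _ hargs_pos, hreverse, sumA_neg, neg_neg,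
    hsum, Finset.prod_mul_distrib, prod_range_sqrt_div hu, Pi.neg_apply, hbessel, Nat.sub_self]
  rw [mul_assoc _ _ (besselProduct _ _ _ _), mul_right_comm, hboundary]
  ring

lemma WhittAr_two_neg (a : ℕ → ℂ) {y : ℕ → ℝ} (hy : 0 < y 0) :
    WhittAr 2 (-a) y = (y 0 : ℂ) ^ (-sumA 2 a) * WhittAr 2 a y := by
  simp only [WhittAr, sumA, Finset.sum_range_succ, Finset.sum_range_zero, Pi.neg_apply, zero_add]
  rw [show (-a 0 - -a 1) / 2 = -((a 0 - a 1) / 2) by ring, BesselK_neg,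
    show (-a 0 + -a 1) / 2 = -(a 0 + a 1) + (a 0 + a 1) / 2 by ring,
    Complex.cpow_add _ _ (Complex.ofReal_ne_zero.mpr hy.ne')]
  ring

theorem WhittAr_neg : ∀ (n : ℕ) (a : ℕ → ℂ) {y : ℕ → ℝ}, (∀ j, 0 < y j) →
    WhittAr n (-a) y = ((∏ j ∈ Finset.range (n - 1), y j : ℝ) : ℂ) ^ (-sumA n a) *
      WhittAr n a fun j => y (n - 2 - j)
  | 0, _, _, _ => by simp [WhittAr]
  | 1, _, _, _ => by simp [WhittAr]
  | 2, a, _, hy => by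
    rw [Nat.add_one_sub_one, Finset.prod_range_one, WhittAr_two_neg a (hy 0)]
    rfl
  | n + 3, a, y, hy => by
    have hc (j : Fin (n + 2)) : 0 < (Real.pi * y j) ^ 2 :=
      pow_pos (mul_pos Real.pi_pos (hy j)) 2
    have hkernel : ∀ u ∈ posSet (n + 2),
        (∏ j, u j)⁻¹ • whittKernel n (-a) y (extR fun j => ((Real.pi * y j) ^ 2 * u j)⁻¹) =
          ((∏ j ∈ Finset.range (n + 2), y j : ℝ) : ℂ) ^ (-sumA (n + 3) a) *
            ((∏ j, (u ∘ Fin.revPerm) j)⁻¹ •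
              whittKernel n a (fun j => y (n + 1 - j)) (extR (u ∘ Fin.revPerm))) := fun u hu => by
      have hprod : ∏ j, (u ∘ Fin.revPerm) j = ∏ j, u j := Equiv.prod_comp Fin.revPerm u
      rw [whittKernel_congr (-a) y (u := fun j => ((Real.pi * y j) ^ 2 * extR u j)⁻¹)
          fun j hj => by rw [extR_of_lt _ hj, extR_of_lt _ hj],
        whittKernel_neg_inv_sq_mul a hy (extR_pos hu) fun b x hx => WhittAr_neg (n + 2) b hx, hprod,
        mul_smul_comm]
      congr 2
      exact whittKernel_congr _ _ fun j hj => (extR_comp_rev u hj).symm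
    rw [WhittAr_eq_setIntegral_whittKernel, setIntegral_posSet_inv_smul_comp_inv_mul hc,
      setIntegral_congr_fun (measurableSet_posSet _) hkernel, integral_const_mul,
      setIntegral_posSet_comp_perm Fin.revPerm
        fun t => (∏ j, t j)⁻¹ • whittKernel n a (fun j => y (n + 1 - j)) (extR t),
      ← WhittAr_eq_setIntegral_whittKernel]
    rfl

lemma prod_cpow_sub_div (m : ℕ) {y : ℕ → ℝ} (hy : ∀ j, 0 < y j) (s : ℕ → ℂ) (z : ℂ) :
    ∏ j ∈ Finset.range m, (y j : ℂ) ^ (s j - z) / (y j : ℂ) =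
      ((∏ j ∈ Finset.range m, y j : ℝ) : ℂ) ^ (-z) *
        ∏ j ∈ Finset.range m, (y j : ℂ) ^ s j / (y j : ℂ) := by
  rw [ofReal_prod_cpow _ fun j _ => (hy j).le, ← Finset.prod_mul_distrib]
  refine Finset.prod_congr rfl fun j _ => ?_
  rw [sub_eq_neg_add, Complex.cpow_add _ _ (Complex.ofReal_ne_zero.mpr (hy j).ne'), mul_div_assoc]

theorem U_contragredient_general (n : ℕ) (a s : ℕ → ℂ) :
    Ufun n a (fun j => s (n - 2 - j) - sumA n a) = Ufun n (-a) s := by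
  unfold Ufun
  rw [← setIntegral_posSet_comp_perm Fin.revPerm]
  refine setIntegral_congr_fun (measurableSet_posSet _) fun y hy => ?_
  have hpos := extR_pos hy
  have hreverse : ∀ j < n - 1, extR (y ∘ Fin.revPerm) j = extR y (n - 2 - j) := fun _ hj =>
    extR_comp_rev y hj
  have hprod : ∏ j ∈ Finset.range (n - 1), (extR (y ∘ Fin.revPerm) j : ℂ) ^
        (s (n - 2 - j) - sumA n a) / (extR (y ∘ Fin.revPerm) j : ℂ) =
      ∏ j ∈ Finset.range (n - 1), (extR y j : ℂ) ^ (s j - sumA n a) / (extR y j : ℂ) := by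
    rw [← Finset.prod_range_reflect _ (n - 1)]
    refine Finset.prod_congr rfl fun j hj => ?_
    rw [hreverse _ (by grind), show n - 2 - (n - 1 - 1 - j) = j by grind]
  simp only [hprod, WhittAr_congr a hreverse, WhittAr_neg n a hpos, prod_cpow_sub_div _ hpos]
  ring

/-- Contragredient symmetry of the Mellin transform of the `GL(n,ℝ)` class one
Whittaker function (part of Corollary 1.6 of Ishii–Stade). -/
theorem U_contragredient (n : ℕ) (hn : 2 ≤ n) (a : ℕ → ℂ)
    (ha : ∀ j < n, (a j).re = 0) (s : ℕ → ℂ) (hs : ∀ j < n - 1, 0 < (s j).re) :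
    Ufun n a (fun j => s (n - 2 - j) - sumA n a) = Ufun n (fun j => -a j) s :=
  U_contragredient_general n a s

end
end
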